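/- For any finite poset P, both the order polytope O(P) and the chain polytope C(P) have a simplex face of dimension equal to the height of P (the maximum cardinality of a chain). -/

import Mathlib

open Set

variable {E : Type*} [AddCommGroup E] [Module ℝ E]

/-- A polytope: the convex hull of a finite set of points. -/
def IsPolytope (P : Set E) : Prop := ∃ S : Finset E, P = convexHull ℝ (S : Set E)

open Classical in
/-- Dimension of a polytope: `-1` for the empty set, else the dimension of its affine span. -/
noncomputable def polyDim (P : Set E) : ℤ :=
  if P = ∅ then -1 else (Module.finrank ℝ (vectorSpan ℝ P) : ℤ)

/-- Number of vertices (extreme points). -/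
noncomputable def vertexCount (P : Set E) : ℕ := (P.extremePoints ℝ).ncard

/-- A simplex: a polytope with `dim + 1` vertices (the empty set counts as a simplex). -/
def IsSimplex (P : Set E) : Prop :=
  IsPolytope P ∧ (vertexCount P : ℤ) = polyDim P + 1

/-- Faces of a polytope are its extreme subsets. -/
def IsFaceOf (F P : Set E) : Prop := IsExtreme ℝ P F

/-- Number of `k`-dimensional simplex faces of `P`. -/
noncomputable def simpCount (P : Set E) (k : ℤ) : ℕ :=
  {F : Set E | IsFaceOf F P ∧ IsSimplex F ∧ polyDim F = k}.ncard

/-- Number of `k`-dimensional simplex faces of `P` containing the origin. -/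
noncomputable def simpCount0 (P : Set E) (k : ℤ) : ℕ :=
  {F : Set E | IsFaceOf F P ∧ IsSimplex F ∧ polyDim F = k ∧ (0 : E) ∈ F}.ncard

/-- Number of `k`-dimensional simplex faces of `P` not containing the origin. -/
noncomputable def simpCount1 (P : Set E) (k : ℤ) : ℕ :=
  {F : Set E | IsFaceOf F P ∧ IsSimplex F ∧ polyDim F = k ∧ (0 : E) ∉ F}.ncard

/-- The order polytope of a poset. -/
def orderPolytope (α : Type*) [PartialOrder α] : Set (α → ℝ) :=
  {x | (∀ p, 0 ≤ x p ∧ x p ≤ 1) ∧ ∀ p q : α, p ≤ q → x p ≤ x q}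

/-- The chain polytope of a poset. -/
def chainPolytope (α : Type*) [PartialOrder α] : Set (α → ℝ) :=
  {x | (∀ p, 0 ≤ x p) ∧ ∀ s : Finset α, IsChain (· ≤ ·) (s : Set α) → ∑ p ∈ s, x p ≤ 1}

open Classical in
/-- Characteristic vector of a subset. -/
noncomputable def chi {α : Type*} (S : Set α) : α → ℝ := fun p => if p ∈ S then 1 else 0

/-- The height of a finite poset: the maximum cardinality of a chain. -/
noncomputable def posetHeight (α : Type*) [PartialOrder α] : ℕ :=
  sSup {n | ∃ s : Finset α, IsChain (· ≤ ·) (s : Set α) ∧ s.card = n}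

/-!
The principal filters `Ici (p i)` of a chain `p 0 < ⋯ < p (n - 1)`, and likewise its singletons,
have characteristic vectors that are triangular with respect to the order, hence linearly
independent; together with `0` they span an `n`-simplex. To see that this simplex is a face, take a
point `x` of the polytope at which every valid linear inequality that is tight on the simplex is
tight. In the chain polytope `x` vanishes off the chain, so it is the combination of the `chi {p i}`
with weights `x (p i)`. In the order polytope `x` is a step function along the chain, so it is the
combination of the `chi (Ici (p i))` whose weights are the successive differences of `x ∘ p`.
-/

theorem affineIndependent_insert_zero {K V : Type*} [DivisionRing K] [AddCommGroup V] [Module K V]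
    {s : Set V} (hs : LinearIndepOn K id s) :
    AffineIndependent K ((↑) : (insert 0 s : Set V) → V) := by
  have h_zero : (0 : V) ∉ s := fun h ↦ hs.ne_zero h rfl
  have h_image : (· -ᵥ (0 : V)) '' (insert 0 s \ {0}) = s := by
    simp [insert_sdiff_self_of_notMem h_zero]
  rw [affineIndependent_set_iff_linearIndependent_vsub K (mem_insert 0 s), h_image]
  exact hs

section Convex

variable {𝕜 V : Type*} [AddCommGroup V]

theorem vectorSpan_convexHull [Ring 𝕜] [PartialOrder 𝕜] [Module 𝕜 V] (s : Set V) :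
    vectorSpan 𝕜 (convexHull 𝕜 s) = vectorSpan 𝕜 s := by
  rw [← direction_affineSpan, affineSpan_convexHull, direction_affineSpan]

variable [Field 𝕜] [LinearOrder 𝕜] [IsStrictOrderedRing 𝕜] [Module 𝕜 V]

theorem sum_smul_mem_convexHull_insert_zero {ι : Type*} [Fintype ι] {w : ι → 𝕜} {v : ι → V}
    (hw : ∀ i, 0 ≤ w i) (hw_sum : ∑ i, w i ≤ 1) :
    ∑ i, w i • v i ∈ convexHull 𝕜 (insert 0 (range v)) := by
  have h := (convex_convexHull 𝕜 (insert 0 (range v))).sum_mem (t := Finset.univ)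
    (w := fun o : Option ι ↦ o.elim (1 - ∑ i, w i) w) (z := fun o ↦ o.elim 0 v) ?_ ?_ ?_
  · simpa [Fintype.sum_option] using h
  · simpa [Option.forall, hw_sum] using hw
  · simp [Fintype.sum_option]
  · refine fun o _ ↦ subset_convexHull 𝕜 _ ?_
    cases o <;> simp

theorem extremePoints_convexHull_of_affineIndependent {s : Finset V}
    (hs : AffineIndependent 𝕜 ((↑) : s → V)) :
    (convexHull 𝕜 (s : Set V)).extremePoints 𝕜 = s := by
  classical
  refine extremePoints_convexHull_subset.antisymm fun x hx ↦
    mem_extremePoints_iff_left.2 ⟨subset_convexHull 𝕜 _ hx, ?_⟩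
  rintro y hy z hz ⟨a, b, ha, hb, hab, hxyz⟩
  obtain ⟨v, hv, hv₁, rfl⟩ := Finset.mem_convexHull'.1 hy
  obtain ⟨w, hw, hw₁, rfl⟩ := Finset.mem_convexHull'.1 hz
  have weights_eq : ∀ u ∈ s, a * v u + b * w u = if u = x then 1 else 0 := by
    refine hs.eq_of_sum_eq_sum_subtype ?_ ?_
    · rw [Finset.sum_add_distrib, ← Finset.mul_sum, ← Finset.mul_sum, hv₁, hw₁]
      simpa [Finset.mem_coe.1 hx] using hab
    · simp only [add_smul, mul_smul, Finset.sum_add_distrib, ← Finset.smul_sum, hxyz]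
      simp [Finset.mem_coe.1 hx]
  have v_eq_zero : ∀ u ∈ s, u ≠ x → v u = 0 := fun u hu hux ↦ by
    have h : a * v u + b * w u = 0 := by simpa [hux] using weights_eq u hu
    have hav : a * v u = 0 := by linarith [mul_nonneg ha.le (hv u hu), mul_nonneg hb.le (hw u hu)]
    exact (mul_eq_zero.1 hav).resolve_left ha.ne'
  have v_x : v x = 1 := by rwa [Finset.sum_eq_single_of_mem x hx v_eq_zero] at hv₁
  rw [Finset.sum_eq_single_of_mem x hx fun u hu hux ↦ by rw [v_eq_zero u hu hux, zero_smul],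
    v_x, one_smul]

end Convex

theorem vertexCount_convexHull_of_affineIndependent {s : Finset E}
    (hs : AffineIndependent ℝ ((↑) : s → E)) :
    vertexCount (convexHull ℝ (s : Set E)) = s.card := by
  rw [vertexCount, extremePoints_convexHull_of_affineIndependent hs, ncard_coe_finset]

theorem polyDim_convexHull_of_affineIndependent {s : Finset E}
    (hs : AffineIndependent ℝ ((↑) : s → E)) :
    polyDim (convexHull ℝ (s : Set E)) = s.card - 1 := by
  obtain rfl | hne := s.eq_empty_or_nonempty
  · simp [polyDim]
  have : Nonempty s := hne.to_subtype
  have hrank := hs.finrank_vectorSpan_add_one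
  rw [Subtype.range_coe_subtype, Fintype.card_coe] at hrank
  rw [polyDim, if_neg (convexHull_nonempty_iff.2 hne).ne_empty, vectorSpan_convexHull, ← hrank]
  simp

theorem isSimplex_convexHull_of_affineIndependent {s : Finset E}
    (hs : AffineIndependent ℝ ((↑) : s → E)) :
    IsSimplex (convexHull ℝ (s : Set E)) :=
  ⟨⟨s, rfl⟩, by
    rw [vertexCount_convexHull_of_affineIndependent hs, polyDim_convexHull_of_affineIndependent hs]
    ring⟩

theorem isSimplex_polyDim_convexHull_insert_zero {ι : Type*} [Finite ι] {v : ι → E}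
    (hv : LinearIndependent ℝ v) :
    IsSimplex (convexHull ℝ (insert 0 (range v))) ∧
      polyDim (convexHull ℝ (insert 0 (range v))) = Nat.card ι := by
  have h_aff := affineIndependent_insert_zero hv.linearIndepOn_id
  have h_card : (insert 0 (range v)).ncard = Nat.card ι + 1 := by
    have h_zero : 0 ∉ range v := by
      rintro ⟨i, hi⟩
      exact hv.ne_zero i hi
    rw [ncard_insert_of_notMem h_zero, ← Nat.card_coe_set_eq,
      Nat.card_range_of_injective hv.injective]
  generalize insert 0 (range v) = s at h_aff h_card
  lift s to Finset E using finite_of_ncard_ne_zero (by omega)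
  rw [ncard_coe_finset] at h_card
  exact ⟨isSimplex_convexHull_of_affineIndependent h_aff, by
    simp [polyDim_convexHull_of_affineIndependent h_aff, h_card]⟩

theorem isFaceOf_convexHull_of_forall_tight {P V : Set E} (hP : Convex ℝ P) (hVP : V ⊆ P)
    (h : ∀ x ∈ P, (∀ l : E →ₗ[ℝ] ℝ, (∀ y ∈ P, 0 ≤ l y) → (∀ v ∈ V, l v = 0) → l x = 0) →
      x ∈ convexHull ℝ V) :
    IsFaceOf (convexHull ℝ V) P := by
  refine ⟨convexHull_min hVP hP, ?_⟩
  rintro x hx y hy z hz ⟨a, b, ha, hb, -, rfl⟩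
  refine h x hx fun l hl hlV ↦ ?_
  have hlz : l (a • x + b • y) = 0 := convexHull_min hlV (LinearMap.ker l).convex hz
  simp only [map_add, map_smul, smul_eq_mul] at hlz
  have hax : a * l x = 0 := by linarith [mul_nonneg ha.le (hl x hx), mul_nonneg hb.le (hl y hy)]
  exact (mul_eq_zero.1 hax).resolve_left ha.ne'

theorem exists_forall_le_iff_le {ι α : Type*} [LinearOrder ι] [Finite ι] [Preorder α]
    {p : ι → α} (hp : Monotone p) {q : α} (hq : ∃ i, p i ≤ q) : ∃ i, ∀ j, p j ≤ q ↔ j ≤ i := by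
  obtain ⟨i, hi, hi_max⟩ := exists_max_image {i | p i ≤ q} id (toFinite _) hq
  exact ⟨i, fun j ↦ ⟨hi_max j, fun hji ↦ (hp hji).trans hi⟩⟩

theorem exists_nonneg_sum_Iic_eq {M : Type*} [AddCommGroup M] [PartialOrder M]
    [IsOrderedAddMonoid M] {n : ℕ} {f : Fin n → M} {b : M} (hf : Monotone f)
    (hf₀ : ∀ i, 0 ≤ f i) (hfb : ∀ i, f i ≤ b) (hb : 0 ≤ b) :
    ∃ c : Fin n → M, (∀ i, 0 ≤ c i) ∧ ∑ i, c i ≤ b ∧ ∀ i, ∑ j ∈ Finset.Iic i, c j = f i := by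
  let g : Fin (n + 1) → M := Fin.cons 0 f
  have hc : ∀ i, ∑ j ∈ Finset.Iic i, (g j.succ - g j.castSucc) = f i := fun i ↦ by
    rw [Fin.sum_Iic_sub]
    simp [g]
  refine ⟨fun i ↦ g i.succ - g i.castSucc, fun i ↦ sub_nonneg.2 ?_, ?_, hc⟩
  · cases n with
    | zero => exact i.elim0
    | succ n =>
      cases i using Fin.cases with
      | zero => simpa [g] using hf₀ 0
      | succ i => simpa [g, ← Fin.succ_castSucc] using hf i.castSucc_lt_succ.le
  · cases n with
    | zero => simpa using hb
    | succ n => simpa [← Fin.top_eq_last, hc] using (hc ⊤).trans_le (hfb ⊤)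

section Poset

variable {α : Type*}

theorem chi_empty : chi (∅ : Set α) = 0 := by
  ext; simp [chi]

variable [PartialOrder α]

theorem linearIndependent_chi {A : α → Set α} (hA : ∀ p, p ∈ A p) (hA_Ici : ∀ p, A p ⊆ Ici p) :
    LinearIndependent ℝ fun p ↦ chi (A p) := by
  classical
  rw [linearIndependent_iff']
  intro s g hg
  by_contra! hne
  obtain ⟨m, hm⟩ := (s.filter (g · ≠ 0)).exists_minimal (by simpa [Finset.Nonempty] using hne)
  obtain ⟨hms, hgm⟩ := Finset.mem_filter.1 hm.prop
  have hsum : ∑ p ∈ s, g p * chi (A p) m = 0 := by simpa using congrFun hg m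
  rw [Finset.sum_eq_single_of_mem m hms fun p hp hpm ↦ ?_] at hsum
  · exact hgm (by simpa [chi, hA] using hsum)
  · by_contra hprod
    obtain ⟨hgp, hmp⟩ : g p ≠ 0 ∧ m ∈ A p := by simpa [chi, and_comm] using hprod
    exact hpm (hm.eq_of_le (Finset.mem_filter.2 ⟨hp, hgp⟩) (hA_Ici p hmp))

theorem convex_orderPolytope : Convex ℝ (orderPolytope α) := by
  rintro x ⟨hx, hx_mono⟩ y ⟨hy, hy_mono⟩ a b ha hb hab
  refine ⟨fun p ↦ convex_Icc (0 : ℝ) 1 (hx p) (hy p) ha hb hab, fun p q hpq ↦ ?_⟩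
  simp only [Pi.add_apply, Pi.smul_apply]
  gcongr
  exacts [hx_mono p q hpq, hy_mono p q hpq]

theorem convex_chainPolytope : Convex ℝ (chainPolytope α) := by
  rintro x ⟨hx, hx_chain⟩ y ⟨hy, hy_chain⟩ a b ha hb hab
  refine ⟨fun p ↦ convex_Ici (0 : ℝ) (hx p) (hy p) ha hb hab, fun s hs ↦ ?_⟩
  simpa [Finset.sum_add_distrib, Finset.mul_sum] using
    convex_Iic (1 : ℝ) (hx_chain s hs) (hy_chain s hs) ha hb hab

theorem chi_mem_orderPolytope {S : Set α} (hS : IsUpperSet S) : chi S ∈ orderPolytope α := by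
  refine ⟨fun p ↦ ?_, fun p q hpq ↦ ?_⟩
  · by_cases hp : p ∈ S <;> simp [chi, hp]
  · by_cases hp : p ∈ S
    · simp [chi, hp, hS hpq hp]
    · by_cases hq : q ∈ S <;> simp [chi, hp, hq]

theorem chi_mem_chainPolytope {A : Set α} (hA : IsAntichain (· ≤ ·) A) :
    chi A ∈ chainPolytope α := by
  classical
  refine ⟨fun p ↦ ?_, fun s hs ↦ ?_⟩
  · by_cases hp : p ∈ A <;> simp [chi, hp]
  · have hcard : (s.filter (· ∈ A)).card ≤ 1 := Finset.card_le_one_iff_subsingleton.2 <| by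
      simpa [Finset.coe_filter, ofPred_and] using inter_subsingleton_of_isChain_of_isAntichain hs hA
    simpa [chi] using hcard

theorem isFaceOf_orderPolytope_convexHull_chi_Ici {n : ℕ} (p : Fin n ↪o α) :
    IsFaceOf (convexHull ℝ (insert 0 (range fun i ↦ chi (Ici (p i))))) (orderPolytope α) := by
  classical
  refine isFaceOf_convexHull_of_forall_tight convex_orderPolytope ?_ ?_
  · rw [← chi_empty, insert_subset_iff, range_subset_iff]
    exact ⟨chi_mem_orderPolytope isUpperSet_empty, fun i ↦ chi_mem_orderPolytope (isUpperSet_Ici _)⟩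
  rintro x ⟨hx, hx_mono⟩ hx_tight
  have eq_zero : ∀ q, (∀ i, ¬ p i ≤ q) → x q = 0 := fun q hq ↦
    hx_tight (LinearMap.proj q) (fun y hy ↦ (hy.1 q).1) (by simp [chi, hq])
  have eq_of_greatest : ∀ q i, (∀ j, p j ≤ q ↔ j ≤ i) → x q = x (p i) := fun q i hi ↦
    sub_eq_zero.1 <| hx_tight (.proj q - .proj (p i) : (α → ℝ) →ₗ[ℝ] ℝ)
      (fun y hy ↦ sub_nonneg.2 (hy.2 _ _ ((hi i).2 le_rfl))) (by simp [chi, hi])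
  obtain ⟨c, hc, hc_sum, hc_Iic⟩ := exists_nonneg_sum_Iic_eq (f := x ∘ p)
    (fun i j hij ↦ hx_mono _ _ (p.monotone hij)) (fun i ↦ (hx _).1) (fun i ↦ (hx _).2) zero_le_one
  have hx_eq : x = ∑ i, c i • chi (Ici (p i)) := by
    ext q
    have h_sum : (∑ i, c i • chi (Ici (p i))) q = ∑ i with p i ≤ q, c i := by
      simp [chi, Finset.sum_filter]
    rw [h_sum]
    by_cases hq : ∃ i, p i ≤ q
    · obtain ⟨i, hi⟩ := exists_forall_le_iff_le p.monotone hq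
      simp [hi, eq_of_greatest q i hi, Finset.filter_ge_eq_Iic, hc_Iic]
    · push Not at hq
      simp [hq, eq_zero q hq]
  rw [hx_eq]
  exact sum_smul_mem_convexHull_insert_zero hc hc_sum

theorem isFaceOf_chainPolytope_convexHull_chi_singleton {n : ℕ} (p : Fin n ↪o α) :
    IsFaceOf (convexHull ℝ (insert 0 (range fun i ↦ chi {p i}))) (chainPolytope α) := by
  classical
  refine isFaceOf_convexHull_of_forall_tight convex_chainPolytope ?_ ?_
  · rw [← chi_empty, insert_subset_iff, range_subset_iff]
    exact ⟨chi_mem_chainPolytope .empty, fun i ↦ chi_mem_chainPolytope .singleton⟩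
  rintro x ⟨hx, hx_chain⟩ hx_tight
  have ne_p {q : α} (hq : q ∉ range p) (i : Fin n) : q ≠ p i := fun h ↦ hq ⟨i, h.symm⟩
  have eq_zero : ∀ q ∉ range p, x q = 0 := fun q hq ↦
    hx_tight (LinearMap.proj q) (fun y hy ↦ hy.1 q) (by simp [chi, ne_p hq])
  have hx_eq : x = ∑ i, x (p i) • chi {p i} := by
    ext q
    by_cases hq : q ∈ range p
    · obtain ⟨i, rfl⟩ := hq
      simp [chi]
    · simp [chi, ne_p hq, eq_zero q hq]
  have hx_sum : ∑ i, x (p i) ≤ 1 := by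
    simpa using hx_chain (Finset.univ.map p.toEmbedding) (by simpa using p.monotone.isChain_range)
  rw [hx_eq]
  exact sum_smul_mem_convexHull_insert_zero (fun i ↦ hx (p i)) hx_sum

theorem nonempty_orderEmbedding_fin_posetHeight [Finite α] :
    Nonempty (Fin (posetHeight α) ↪o α) := by
  classical
  have := Fintype.ofFinite α
  obtain ⟨s, hs, hcard⟩ : posetHeight α ∈
      {n | ∃ s : Finset α, IsChain (· ≤ ·) (s : Set α) ∧ s.card = n} := by
    refine Nat.sSup_mem ⟨0, ∅, by simp⟩ ⟨Fintype.card α, ?_⟩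
    rintro _ ⟨s, -, rfl⟩
    exact s.card_le_univ
  let _ : LinearOrder (s : Set α) := hs.linearOrder
  exact ⟨(Fintype.orderIsoFinOfCardEq (s : Set α) (by simpa using hcard)).toOrderEmbedding.trans
    (OrderEmbedding.subtype _)⟩

theorem simplex_face_of_height_general {n : ℕ} (p : Fin n ↪o α) :
    (∃ F : Set (α → ℝ), IsFaceOf F (orderPolytope α) ∧ IsSimplex F ∧ polyDim F = n) ∧
    (∃ F : Set (α → ℝ), IsFaceOf F (chainPolytope α) ∧ IsSimplex F ∧ polyDim F = n) := by
  have simplex_of_triangular {A : α → Set α} (hA : ∀ q, q ∈ A q) (hA_Ici : ∀ q, A q ⊆ Ici q) :=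
    isSimplex_polyDim_convexHull_insert_zero ((linearIndependent_chi hA hA_Ici).comp p p.injective)
  rw [Nat.card_fin] at simplex_of_triangular
  exact ⟨⟨_, isFaceOf_orderPolytope_convexHull_chi_Ici p,
      simplex_of_triangular (fun _ ↦ self_mem_Ici) fun _ ↦ .rfl⟩,
    ⟨_, isFaceOf_chainPolytope_convexHull_chi_singleton p,
      simplex_of_triangular mem_singleton (by simp)⟩⟩

end Poset

/-- both the order polytope and the chain polytope of a finite poset have
a simplex face of dimension equal to the height of the poset. -/
theorem simplex_face_of_height (α : Type*) [Fintype α] [PartialOrder α] :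
    (∃ F : Set (α → ℝ), IsFaceOf F (orderPolytope α) ∧ IsSimplex F ∧
      polyDim F = (posetHeight α : ℤ)) ∧
    (∃ F : Set (α → ℝ), IsFaceOf F (chainPolytope α) ∧ IsSimplex F ∧
      polyDim F = (posetHeight α : ℤ)) := by
  obtain ⟨p⟩ := nonempty_orderEmbedding_fin_posetHeight (α := α)
  exact simplex_face_of_height_general p
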